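/- Let 𝒩 be a network architecture whose buffer structure satisfies the buffer axioms B1–B8 (matched-pair cancellation, lifted axiom B8). Let w₁ be an 𝒩-channel-compliant finite word such that remove(p,q,v) is undefined on the buffer ξ(ν(p,q)) of the channel state ξ reached by w₁. If w = w₁ · (p▷q!v) · u · (p▷q?v) is 𝒩-channel-compliant and the event p▷q?v does not occur in u, then w₁ · u is 𝒩-channel-compliant and reaches the same channel state as w. -/

import Mathlib

/-!
Distinct channels do not interact, so executing a word amounts to running, on each channel
separately, the sequence of buffer operations that the word performs there
(`runFrom_eq_some_iff`). On a channel other than `ν(p,q)` the matched pair contributes no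
operation, so `u` and `(p▷q!v) · u · (p▷q?v)` act identically. On `ν(p,q)` the latter acts as
`insert m`, then the operations `σ` of `u`, then `remove m`, where `remove m` does not occur in
`σ`; axiom B8 says that this has the same result as `σ` alone.
-/

/-- Operations on a buffer: insert or remove a message. -/
inductive BOp (M : Type) where
  | ins (m : M)
  | rem (m : M)

/-- Apply a single buffer operation. -/
def applyOp {M B : Type} (ins rem : M → B → Option B) : BOp M → B → Option B
  | .ins m, b => ins m b
  | .rem m, b => rem m b

/-- Apply a finite sequence of buffer operations, left to right. -/
def applySeq {M B : Type} (ins rem : M → B → Option B) : List (BOp M) → B → Option B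
  | [], b => some b
  | op :: σ, b => (applyOp ins rem op b).bind (applySeq ins rem σ)

/-- The eight buffer axioms B1–B8 for a buffer structure with contents `B`,
partial operations `ins`, `rem` and empty buffer `b0`. -/
structure BufferAxioms (M B : Type) (ins rem : M → B → Option B) (b0 : B) : Prop where
  b1 : ∀ (m : M) (b : B), (ins m b).isSome
  b2 : ∀ m : M, ((ins m b0).bind (rem m)).isSome
  b3 : ∀ m : M, rem m b0 = none
  b4 : ∀ (m m' : M) (b : B), (rem m b).isSome → ((ins m' b).bind (rem m)).isSome
  b5 : ∀ (m : M) (b : B) (σ : List (BOp M)), BOp.rem m ∉ σ →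
        ((ins m b).bind (applySeq ins rem σ)).isSome → (applySeq ins rem σ b).isSome
  b6 : ∀ (m : M) (b : B), (rem m b).isSome →
        (ins m b).bind (rem m) = (rem m b).bind (ins m)
  b7 : ∀ (m m' : M) (b : B), m ≠ m' →
        (ins m b).bind (rem m') = (rem m' b).bind (ins m)
  b8 : ∀ (m : M) (b : B) (σ : List (BOp M)), rem m b = none → BOp.rem m ∉ σ →
        (((ins m b).bind (applySeq ins rem σ)).bind (rem m)).isSome →
        ((ins m b).bind (applySeq ins rem σ)).bind (rem m) = applySeq ins rem σ b

/-- Asynchronous events: send events `p▷q!v` and receive events `p▷q?v`. -/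
inductive Event (P V : Type) where
  | send (p q : P) (v : V)
  | recv (p q : P) (v : V)
deriving DecidableEq

/-- The active participant of an event: the sender of a send, the receiver of a receive. -/
def Event.active {P V : Type} : Event P V → P
  | .send p _ _ => p
  | .recv _ q _ => q

/-- A network architecture: channels `C`, buffer contents `B`, a channel map,
partial insert/remove operations, and an empty buffer. -/
structure NetArch (P V C B : Type) where
  chan : P → P → C
  insert : P × P × V → B → Option B
  remove : P × P × V → B → Option B
  b0 : B

variable {P V C B : Type}

/-- Executing a single event on a channel state. -/
def NetArch.step [DecidableEq C] (N : NetArch P V C B) :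
    Event P V → (C → B) → Option (C → B)
  | .send p q v, ξ => (N.insert (p, q, v) (ξ (N.chan p q))).map (Function.update ξ (N.chan p q))
  | .recv p q v, ξ => (N.remove (p, q, v) (ξ (N.chan p q))).map (Function.update ξ (N.chan p q))

/-- Executing a finite word of events from a channel state. -/
def NetArch.runFrom [DecidableEq C] (N : NetArch P V C B) :
    List (Event P V) → (C → B) → Option (C → B)
  | [], ξ => some ξ
  | e :: w, ξ => (N.step e ξ).bind (N.runFrom w)

/-- The initial channel state: every channel holds the empty buffer. -/
def NetArch.init (N : NetArch P V C B) : C → B := fun _ => N.b0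

/-- A finite word is channel-compliant if executing it from the initial channel
state is defined at every step. -/
def NetArch.compliant [DecidableEq C] (N : NetArch P V C B) (w : List (Event P V)) : Prop :=
  (N.runFrom w N.init).isSome

/-- A finite word is channel-matched if it is channel-compliant and reaches the
initial (all-empty) channel state. -/
def NetArch.matched [DecidableEq C] (N : NetArch P V C B) (w : List (Event P V)) : Prop :=
  N.runFrom w N.init = some N.init

/-- Projection of a word onto the events in which participant `r` is active. -/
def proj [DecidableEq P] (r : P) (w : List (Event P V)) : List (Event P V) :=
  w.filter (fun e => decide (e.active = r))

/-- Equality under local projection. -/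
def equivP [DecidableEq P] (w₁ w₂ : List (Event P V)) : Prop :=
  ∀ r : P, proj r w₁ = proj r w₂

/-- `split` replaces every synchronous message exchange `(p,q,v)` by the two
consecutive asynchronous events `p▷q!v · p▷q?v`. -/
def split : List (P × P × V) → List (Event P V)
  | [] => []
  | m :: ρ => Event.send m.1 m.2.1 m.2.2 :: Event.recv m.1 m.2.1 m.2.2 :: split ρ

/-- The channel an event acts on. -/
def NetArch.evChan (N : NetArch P V C B) : Event P V → C
  | .send p q _ => N.chan p q
  | .recv p q _ => N.chan p q

/-- The buffer operation an event performs on its channel. -/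
def Event.toOp : Event P V → BOp (P × P × V)
  | .send p q v => .ins (p, q, v)
  | .recv p q v => .rem (p, q, v)

/-- The sequence of buffer operations that a word performs on channel `c`. -/
def NetArch.chanOps [DecidableEq C] (N : NetArch P V C B) (c : C) (w : List (Event P V)) :
    List (BOp (P × P × V)) :=
  (w.filter (fun e => decide (N.evChan e = c))).map Event.toOp

theorem NetArch.step_eq [DecidableEq C] (N : NetArch P V C B) (e : Event P V) (ξ : C → B) :
    N.step e ξ = (applyOp N.insert N.remove e.toOp (ξ (N.evChan e))).map
      (Function.update ξ (N.evChan e)) := by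
  cases e <;> rfl

theorem NetArch.runFrom_append [DecidableEq C] (N : NetArch P V C B) (w w' : List (Event P V))
    (ξ : C → B) : N.runFrom (w ++ w') ξ = (N.runFrom w ξ).bind (N.runFrom w') := by
  induction w generalizing ξ with
  | nil => rfl
  | cons e w ih =>
    simp only [List.cons_append, NetArch.runFrom, Option.bind_assoc]
    exact congrArg _ (funext ih)

theorem applySeq_append {M B : Type} (ins rem : M → B → Option B) (σ τ : List (BOp M)) (b : B) :
    applySeq ins rem (σ ++ τ) b = (applySeq ins rem σ b).bind (applySeq ins rem τ) := by
  induction σ generalizing b with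
  | nil => rfl
  | cons o σ ih =>
    simp only [List.cons_append, applySeq, Option.bind_assoc]
    exact congrArg _ (funext ih)

/-- Execution decomposes over channels: a word leads from `ξ` to `ξ'` iff on every channel its
buffer operations lead from the contents in `ξ` to the contents in `ξ'`. -/
theorem NetArch.runFrom_eq_some_iff [DecidableEq C] (N : NetArch P V C B) (w : List (Event P V))
    (ξ ξ' : C → B) : N.runFrom w ξ = some ξ' ↔
      ∀ c, applySeq N.insert N.remove (N.chanOps c w) (ξ c) = some (ξ' c) := by
  induction w generalizing ξ with
  | nil => simp [NetArch.runFrom, NetArch.chanOps, applySeq, funext_iff]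
  | cons e w ih =>
    have hsame : N.chanOps (N.evChan e) (e :: w) = e.toOp :: N.chanOps (N.evChan e) w := by
      simp [NetArch.chanOps]
    have hother : ∀ c, c ≠ N.evChan e → N.chanOps c (e :: w) = N.chanOps c w := by
      intro c hc
      simp [NetArch.chanOps, Ne.symm hc]
    rw [NetArch.runFrom, NetArch.step_eq]
    cases hb : applyOp N.insert N.remove e.toOp (ξ (N.evChan e)) with
    | none =>
      refine iff_of_false (by simp) fun h => ?_
      have := h (N.evChan e)
      simp [hsame, applySeq, hb] at this
    | some b =>
      simp only [Option.map_some, Option.bind_some, ih]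
      refine forall_congr' fun c => ?_
      by_cases hc : c = N.evChan e
      · subst hc
        simp [hsame, applySeq, hb]
      · simp [hother c hc, Function.update_of_ne hc]

theorem NetArch.rem_notMem_chanOps [DecidableEq C] (N : NetArch P V C B) {u : List (Event P V)}
    {p q : P} {v : V} (h : Event.recv p q v ∉ u) (c : C) : BOp.rem (p, q, v) ∉ N.chanOps c u := by
  intro hmem
  obtain ⟨e, he, heq⟩ := List.mem_map.1 hmem
  have heu := (List.mem_filter.1 he).1
  cases e with
  | send p' q' v' => simp [Event.toOp] at heq
  | recv p' q' v' =>
    simp only [Event.toOp, BOp.rem.injEq, Prod.mk.injEq] at heq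
    obtain ⟨rfl, rfl, rfl⟩ := heq
    exact h heu

/-- Matched-pair cancellation (axiom B8 lifted to words): if `w₁` is
channel-compliant and reaches a channel state on which `remove (p,q,v)` is
undefined, and `w₁ · (p▷q!v) · u · (p▷q?v)` is channel-compliant with no
occurrence of `p▷q?v` in `u`, then `w₁ · u` is channel-compliant and reaches
the same channel state. -/
theorem lifted_b8_cancel {P V C B : Type} [DecidableEq C] (N : NetArch P V C B)
    (hN : BufferAxioms (P × P × V) B N.insert N.remove N.b0)
    (w₁ u : List (Event P V)) (p q : P) (hpq : p ≠ q) (v : V)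
    (ξ : C → B) (h1 : N.runFrom w₁ N.init = some ξ)
    (h2 : N.remove (p, q, v) (ξ (N.chan p q)) = none)
    (h3 : N.compliant (w₁ ++ Event.send p q v :: (u ++ [Event.recv p q v])))
    (h4 : Event.recv p q v ∉ u) :
    N.compliant (w₁ ++ u) ∧
    N.runFrom (w₁ ++ u) N.init =
      N.runFrom (w₁ ++ Event.send p q v :: (u ++ [Event.recv p q v])) N.init := by
  obtain ⟨ξ', hξ'⟩ := Option.isSome_iff_exists.1 h3
  suffices h : N.runFrom (w₁ ++ u) N.init = some ξ' from
    ⟨by simp [NetArch.compliant, h], h.trans hξ'.symm⟩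
  rw [NetArch.runFrom_append, h1, Option.bind_some, NetArch.runFrom_eq_some_iff] at hξ' ⊢
  intro c
  have hc := hξ' c
  by_cases hcc : N.chan p q = c
  · subst hcc
    have hops : N.chanOps (N.chan p q) (Event.send p q v :: (u ++ [Event.recv p q v])) =
        BOp.ins (p, q, v) :: (N.chanOps (N.chan p q) u ++ [BOp.rem (p, q, v)]) := by
      simp [NetArch.chanOps, NetArch.evChan, Event.toOp]
    have hpair : ((N.insert (p, q, v) (ξ (N.chan p q))).bind
        (applySeq N.insert N.remove (N.chanOps (N.chan p q) u))).bind (N.remove (p, q, v)) =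
        some (ξ' (N.chan p q)) := by
      rw [← hc, hops]
      simp [applySeq, applySeq_append, applyOp, Option.bind_assoc]
    rw [← hpair]
    exact (hN.b8 _ _ _ h2 (N.rem_notMem_chanOps h4 _) (by simp [hpair])).symm
  · have hops : N.chanOps c (Event.send p q v :: (u ++ [Event.recv p q v])) = N.chanOps c u := by
      simp [NetArch.chanOps, NetArch.evChan, hcc]
    rwa [hops] at hc
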